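/- arXiv:2212.07987 — 2 statements merged into one kernel-verified Lean document; each statement's English description precedes it below -/
import Mathlib

section
/- Let a quantum network satisfy Assumptions A1 and A2 with network state |ψ⟩ = ⊗_{i=1}^{N_s} |GHZ_{Λ_i}⟩. Then for every pair of distinct measurement nodes A_i and A_j, the measured mutual information of the reduced state of |ψ⟩⟨ψ| on the qubits at A_i ∪ A_j equals the number of shared sources: I_m(A_i; A_j) = N_s^{A_i,A_j}. Moreover the supremum defining I_m is attained by the computational-basis measurement at both nodes. -/
open scoped Kronecker Matrix Classical

noncomputable section

/-- Base-2 Shannon entropy of a finitely supported distribution. -/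
def shannon {α : Type*} [Fintype α] (p : α → ℝ) : ℝ :=
  -∑ x, p x * Real.logb 2 (p x)

/-- Base-2 von Neumann entropy of a matrix (junk value `0` if not Hermitian),
computed from the eigenvalues. -/
def vnEntropy {d : Type*} [Fintype d] [DecidableEq d] (ρ : Matrix d d ℂ) : ℝ :=
  if h : ρ.IsHermitian then -∑ k, h.eigenvalues k * Real.logb 2 (h.eigenvalues k) else 0

/-- A projection-valued measure on a finite-dimensional space: a finite family of
mutually orthogonal self-adjoint projections summing to the identity. -/
structure PVM (ι : Type*) (d : Type*) [Fintype d] [DecidableEq d] where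
  [fintype : Fintype ι]
  proj : ι → Matrix d d ℂ
  herm : ∀ a, (proj a).IsHermitian
  idem : ∀ a, proj a * proj a = proj a
  orthogonal : ∀ a b, a ≠ b → proj a * proj b = 0
  complete : ∑ a, proj a = 1

/-- Outcome distribution of a PVM measurement on a state. -/
def pvmProb {ι d : Type*} [Fintype d] [DecidableEq d] (P : PVM ι d)
    (ρ : Matrix d d ℂ) : ι → ℝ :=
  fun a => ((P.proj a * ρ).trace).re

/-- Shannon entropy of the outcome distribution of a PVM measurement. -/
def pvmEntropy {ι d : Type*} [Fintype d] [DecidableEq d] (P : PVM ι d)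
    (ρ : Matrix d d ℂ) : ℝ :=
  letI := P.fintype
  shannon (pvmProb P ρ)

/-- Joint outcome distribution of a product of two local PVMs on a bipartite state. -/
def jointProb {ιA ιB dA dB : Type*} [Fintype dA] [DecidableEq dA] [Fintype dB]
    [DecidableEq dB] (P : PVM ιA dA) (Q : PVM ιB dB)
    (ρ : Matrix (dA × dB) (dA × dB) ℂ) : ιA × ιB → ℝ :=
  fun ab => (((P.proj ab.1 ⊗ₖ Q.proj ab.2) * ρ).trace).re

/-- Shannon entropy of the joint outcome distribution of a product of two local PVMs. -/
def jointEntropy {ιA ιB dA dB : Type*} [Fintype dA] [DecidableEq dA] [Fintype dB]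
    [DecidableEq dB] (P : PVM ιA dA) (Q : PVM ιB dB)
    (ρ : Matrix (dA × dB) (dA × dB) ℂ) : ℝ :=
  letI := P.fintype; letI := Q.fintype
  shannon (jointProb P Q ρ)

/-- Mutual information `H(P_A) + H(P_B) - H(P_{AB})` of the joint outcome distribution
of a product of two local PVMs on a bipartite state. -/
def miOf {ιA ιB dA dB : Type*} [Fintype dA] [DecidableEq dA] [Fintype dB]
    [DecidableEq dB] (P : PVM ιA dA) (Q : PVM ιB dB)
    (ρ : Matrix (dA × dB) (dA × dB) ℂ) : ℝ :=
  letI := P.fintype; letI := Q.fintype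
  shannon (fun a : ιA => ∑ b : ιB, jointProb P Q ρ (a, b)) +
    shannon (fun b : ιB => ∑ a : ιA, jointProb P Q ρ (a, b)) -
    shannon (jointProb P Q ρ)

/-- Measured mutual information: the supremum of `miOf` over all pairs of local PVMs. -/
def measuredMI {dA dB : Type*} [Fintype dA] [DecidableEq dA] [Fintype dB] [DecidableEq dB]
    (ρ : Matrix (dA × dB) (dA × dB) ℂ) : ℝ :=
  sSup { r : ℝ | ∃ (ιA ιB : Type) (P : PVM ιA dA) (Q : PVM ιB dB), r = miOf P Q ρ }

/-- The computational-basis PVM. -/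
def compPVM (d : Type*) [Fintype d] [DecidableEq d] : PVM d d where
  proj x := Matrix.diagonal (fun y => if y = x then (1 : ℂ) else 0)
  herm x := by
    refine Matrix.isHermitian_diagonal_of_self_adjoint _ ?_
    funext y
    by_cases h : y = x <;> simp [h]
  idem x := by
    rw [Matrix.diagonal_mul_diagonal]
    ext y z
    by_cases h : y = z
    · subst h
      by_cases h2 : y = x <;> simp [Matrix.diagonal_apply, h2]
    · simp [Matrix.diagonal_apply, h]
  orthogonal a b hab := by
    rw [Matrix.diagonal_mul_diagonal]
    have h0 : (fun y => (if y = a then (1:ℂ) else 0) * (if y = b then (1:ℂ) else 0))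
        = fun _ => (0:ℂ) := by
      funext y
      by_cases h : y = a <;> by_cases h' : y = b <;> simp_all
    rw [h0, Matrix.diagonal_zero]
  complete := by
    ext y z
    rw [Matrix.sum_apply]
    by_cases h : y = z
    · subst h
      simp [Matrix.diagonal_apply, Matrix.one_apply]
    · simp [Matrix.diagonal_apply, Matrix.one_apply, h]

/-- A two-layer quantum network: qubit `q` comes from source `src q` and is sent to
measurement node `node q`. -/
structure Net (Nq Ns Nm : ℕ) where
  src : Fin Nq → Fin Ns
  node : Fin Nq → Fin Nm

namespace Net

variable {Nq Ns Nm : ℕ}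

/-- Assumption A2: each source sends at most one qubit to any given measurement node. -/
def A2 (N : Net Nq Ns Nm) : Prop :=
  Function.Injective fun q => (N.src q, N.node q)

/-- Assumption A1 (GHZ preparation): every source has at least two qubits.  The GHZ
state preparation itself is hard-coded in `ghzState`. -/
def A1 (N : Net Nq Ns Nm) : Prop :=
  ∀ i : Fin Ns, 2 ≤ Fintype.card {q : Fin Nq // N.src q = i}

/-- Amplitude of the network state `⊗ᵢ |GHZ_{Λᵢ}⟩`: the amplitude at a bit string `x`
is the product over sources of `1/√2` if `x` is constant on the source, else `0`. -/
def ghzVec (N : Net Nq Ns Nm) : (Fin Nq → Fin 2) → ℂ :=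
  fun x => ∏ i : Fin Ns,
    if ∃ b : Fin 2, ∀ q, N.src q = i → x q = b then ((Real.sqrt 2 : ℝ) : ℂ)⁻¹ else 0

/-- The (pure) network state `|ψ⟩⟨ψ|` with `|ψ⟩ = ⊗ᵢ |GHZ_{Λᵢ}⟩`. -/
def ghzState (N : Net Nq Ns Nm) : Matrix (Fin Nq → Fin 2) (Fin Nq → Fin 2) ℂ :=
  Matrix.of fun x y => N.ghzVec x * star (N.ghzVec y)

/-- Partial trace of a full network state onto the qubits at node `j`. -/
def reduceNode (N : Net Nq Ns Nm) (j : Fin Nm)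
    (ρ : Matrix (Fin Nq → Fin 2) (Fin Nq → Fin 2) ℂ) :
    Matrix ({q : Fin Nq // N.node q = j} → Fin 2)
      ({q : Fin Nq // N.node q = j} → Fin 2) ℂ :=
  Matrix.of fun x y => ∑ z : {q : Fin Nq // N.node q ≠ j} → Fin 2,
    ρ (fun q => if h : N.node q = j then x ⟨q, h⟩ else z ⟨q, h⟩)
      (fun q => if h : N.node q = j then y ⟨q, h⟩ else z ⟨q, h⟩)

/-- Combine assignments on the qubits of nodes `i` and `j` with an assignment on the
remaining qubits into a full assignment. -/
def mergePair (N : Net Nq Ns Nm) (i j : Fin Nm)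
    (x : ({q : Fin Nq // N.node q = i} → Fin 2) × ({q : Fin Nq // N.node q = j} → Fin 2))
    (z : {q : Fin Nq // N.node q ≠ i ∧ N.node q ≠ j} → Fin 2) : Fin Nq → Fin 2 :=
  fun q =>
    if h : N.node q = i then x.1 ⟨q, h⟩
    else if h' : N.node q = j then x.2 ⟨q, h'⟩
    else z ⟨q, ⟨h, h'⟩⟩

/-- Partial trace of a full network state onto the qubits at the two nodes `i` and `j`,
as a bipartite state (first tensor factor: node `i`; second: node `j`). -/
def reducePair (N : Net Nq Ns Nm) (i j : Fin Nm)
    (ρ : Matrix (Fin Nq → Fin 2) (Fin Nq → Fin 2) ℂ) :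
    Matrix (({q : Fin Nq // N.node q = i} → Fin 2) × ({q : Fin Nq // N.node q = j} → Fin 2))
      (({q : Fin Nq // N.node q = i} → Fin 2) × ({q : Fin Nq // N.node q = j} → Fin 2)) ℂ :=
  Matrix.of fun x y => ∑ z : {q : Fin Nq // N.node q ≠ i ∧ N.node q ≠ j} → Fin 2,
    ρ (N.mergePair i j x z) (N.mergePair i j y z)

/-- `N_s^{A_j}`: the number of sources having a qubit at node `j`. -/
def nSrcAt (N : Net Nq Ns Nm) (j : Fin Nm) : ℕ :=
  Fintype.card {i : Fin Ns // ∃ q, N.src q = i ∧ N.node q = j}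

/-- `N_s^{A_i,A_j}`: the number of sources having qubits at both nodes `i` and `j`. -/
def nShared (N : Net Nq Ns Nm) (i j : Fin Nm) : ℕ :=
  Fintype.card
    {k : Fin Ns // (∃ q, N.src q = k ∧ N.node q = i) ∧ (∃ q, N.src q = k ∧ N.node q = j)}

/-- The full noisy network state `⊗ᵢ E_γ(|GHZ_{Λᵢ}⟩⟨GHZ_{Λᵢ}|)`, where `E_γ` is the
depolarizing channel of strength `γ` acting jointly on the qubits of each source. -/
def depolGhzState (N : Net Nq Ns Nm) (γ : ℝ) :
    Matrix (Fin Nq → Fin 2) (Fin Nq → Fin 2) ℂ :=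
  Matrix.of fun x y => ∏ i : Fin Ns,
    ((1 - (γ : ℂ)) *
        ((if ∃ b : Fin 2, ∀ q, N.src q = i → x q = b then ((Real.sqrt 2 : ℝ) : ℂ)⁻¹ else 0) *
          star (if ∃ b : Fin 2, ∀ q, N.src q = i → y q = b
            then ((Real.sqrt 2 : ℝ) : ℂ)⁻¹ else 0))
      + (γ : ℂ) * ((2 : ℂ) ^ Fintype.card {q : Fin Nq // N.src q = i})⁻¹ *
          (if ∀ q, N.src q = i → x q = y q then 1 else 0))

end Net

/-- Two networks (with the same node set) have the same topology if there are bijections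
of their qubit sets, source sets and node sets commuting with the source and node maps. -/
def SameTopology {Nq₁ Ns₁ Nq₂ Ns₂ Nm : ℕ} (N₁ : Net Nq₁ Ns₁ Nm) (N₂ : Net Nq₂ Ns₂ Nm) :
    Prop :=
  ∃ (eqv : Fin Nq₁ ≃ Fin Nq₂) (esv : Fin Ns₁ ≃ Fin Ns₂) (emv : Fin Nm ≃ Fin Nm),
    (∀ q, N₂.src (eqv q) = esv (N₁.src q)) ∧ (∀ q, N₂.node (eqv q) = emv (N₁.node q))

namespace MMI

open scoped ComplexOrder

set_option linter.all false

lemma mi_formula {ιA ιB : Type*} [Fintype ιA] [Fintype ιB] (p : ιA × ιB → ℝ) :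
    shannon (fun a : ιA => ∑ b : ιB, p (a, b)) +
    shannon (fun b : ιB => ∑ a : ιA, p (a, b)) - shannon p =
    ∑ a, ∑ b, p (a, b) * (Real.logb 2 (p (a, b)) - Real.logb 2 (∑ b', p (a, b'))
      - Real.logb 2 (∑ a', p (a', b))) := by
  have h2 : ∑ b : ιB, (∑ a, p (a, b)) * Real.logb 2 (∑ a', p (a', b))
      = ∑ a, ∑ b, p (a, b) * Real.logb 2 (∑ a', p (a', b)) := by
    rw [Finset.sum_comm]
    simp_rw [Finset.sum_mul]
  have h1 : ∑ a : ιA, (∑ b, p (a, b)) * Real.logb 2 (∑ b', p (a, b'))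
      = ∑ a, ∑ b, p (a, b) * Real.logb 2 (∑ b', p (a, b')) := by
    simp_rw [Finset.sum_mul]
  unfold shannon
  rw [h1, h2, Fintype.sum_prod_type]
  simp_rw [mul_sub, Finset.sum_sub_distrib]
  ring

lemma proj_psd {d : Type*} [Fintype d] [DecidableEq d] {P : Matrix d d ℂ}
    (h : P.IsHermitian) (hi : P * P = P) : P.PosSemidef := by
  have := Matrix.posSemidef_conjTranspose_mul_self P
  rwa [h.eq, hi] at this

lemma psd_diag {d : Type*} [Fintype d] [DecidableEq d] {P : Matrix d d ℂ}
    (h : P.PosSemidef) (x : d) : 0 ≤ (P x x).re ∧ (P x x).im = 0 := by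
  have := h.diag_nonneg (i := x)
  rw [Complex.le_def] at this
  exact ⟨by simpa using this.1, by simpa using this.2.symm⟩

lemma psd_entry {d : Type*} [Fintype d] [DecidableEq d] {P : Matrix d d ℂ}
    (h : P.PosSemidef) (x y : d) : ‖P x y‖ ^ 2 ≤ (P x x).re * (P y y).re := by
  have h2 := (h.submatrix ![x, y]).det_nonneg
  rw [Matrix.det_fin_two] at h2
  simp only [Matrix.submatrix_apply, Matrix.cons_val_zero, Matrix.cons_val_one] at h2
  have h3 : P y x = star (P x y) := (h.isHermitian.apply y x).symm
  rw [h3, Complex.le_def] at h2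
  have := h2.1
  have e : (P x y * star (P x y)) = ((‖P x y‖ ^ 2 : ℝ) : ℂ) := by
    rw [Complex.star_def, Complex.mul_conj, Complex.normSq_eq_norm_sq]
  rw [e] at this
  simp only [Complex.zero_re, Complex.sub_re, Complex.mul_re, (psd_diag h x).2, Complex.ofReal_re] at this
  linarith

lemma entry_bound {d e : Type*} [Fintype d] [DecidableEq d] [Fintype e] [DecidableEq e]
    {P : Matrix d d ℂ} {Q : Matrix e e ℂ}
    (hP : P.PosSemidef) (hQ : Q.PosSemidef) (x y : d) (z w : e) :
    (P x y * Q z w).re ≤ ((P x x).re * (Q w w).re + (P y y).re * (Q z z).re) / 2 := by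
  refine (Complex.re_le_norm _).trans ?_
  rw [norm_mul]
  have a := (psd_diag hP x).1
  have b := (psd_diag hP y).1
  have c := (psd_diag hQ z).1
  have d := (psd_diag hQ w).1
  apply abs_le_of_sq_le_sq' _ (by positivity) |>.2
  have h1 := mul_le_mul (psd_entry hP x y) (psd_entry hQ z w) (by positivity) (by positivity)
  rw [mul_pow]
  refine h1.trans ?_
  nlinarith [sq_nonneg ((P x x).re * (Q w w).re - (P y y).re * (Q z z).re)]

variable {Nq Ns Nm : ℕ}

def rs (N : Net Nq Ns Nm) (p : Fin Nq → Prop) (c : Fin Ns → Fin 2) : {q // p q} → Fin 2 :=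
  fun q => c (N.src q.1)

lemma src_surj (N : Net Nq Ns Nm) (hA1 : N.A1) : Function.Surjective N.src := by
  intro k
  have := hA1 k
  have h : 0 < Fintype.card {q : Fin Nq // N.src q = k} := by omega
  obtain ⟨q, hq⟩ := Fintype.card_pos_iff.1 h
  exact ⟨q, hq⟩

lemma ghzVec_eq (N : Net Nq Ns Nm) (hA1 : N.A1) (x : Fin Nq → Fin 2) :
    N.ghzVec x = (((Real.sqrt 2 : ℝ) : ℂ)⁻¹) ^ Ns *
      ∑ c : Fin Ns → Fin 2, if x = c ∘ N.src then 1 else 0 := by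
  unfold Net.ghzVec
  by_cases h : ∃ c : Fin Ns → Fin 2, x = c ∘ N.src
  · obtain ⟨c, rfl⟩ := h
    have e : ∀ c' : Fin Ns → Fin 2, (c ∘ N.src = c' ∘ N.src) ↔ c = c' := fun c' =>
      (src_surj N hA1).injective_comp_right.eq_iff
    simp only [e]
    rw [Finset.prod_congr rfl (g := fun _ => ((Real.sqrt 2 : ℝ) : ℂ)⁻¹)]
    · simp
    · intro k _
      rw [if_pos]
      exact ⟨c k, fun q hq => by simp [hq]⟩
  · have h' : ∃ k : Fin Ns, ¬ ∃ b : Fin 2, ∀ q, N.src q = k → x q = b := by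
      by_contra! h'
      choose c hc using h'
      exact h ⟨c, funext fun q => hc _ q rfl⟩
    obtain ⟨k, hk⟩ := h'
    rw [Finset.prod_eq_zero (Finset.mem_univ k) (if_neg hk)]
    rw [Finset.sum_eq_zero, mul_zero]
    intro c _
    rw [if_neg]
    exact fun hc => h ⟨c, hc⟩

lemma merge_iff (N : Net Nq Ns Nm) {i j : Fin Nm} (hij : i ≠ j)
    (x : ({q : Fin Nq // N.node q = i} → Fin 2) × ({q : Fin Nq // N.node q = j} → Fin 2))
    (z : {q : Fin Nq // N.node q ≠ i ∧ N.node q ≠ j} → Fin 2) (c : Fin Ns → Fin 2) :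
    N.mergePair i j x z = c ∘ N.src ↔
      x = (rs N _ c, rs N _ c) ∧ z = rs N _ c := by
  constructor
  · intro h
    have h' := fun q => congrFun h q
    simp only [Net.mergePair, Function.comp] at h'
    refine ⟨Prod.ext (funext ?_) (funext ?_), funext ?_⟩
    · rintro ⟨q, hq⟩
      simpa [rs, hq] using h' q
    · rintro ⟨q, hq⟩
      have : N.node q ≠ i := by rw [hq]; exact hij.symm
      have := h' q
      rw [dif_neg ‹_›, dif_pos hq] at this
      simpa [rs] using this
    · rintro ⟨q, hq⟩
      simpa [rs, hq.1, hq.2] using h' q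
  · rintro ⟨rfl, rfl⟩
    funext q
    simp only [Net.mergePair, rs, Function.comp]
    split_ifs <;> rfl

lemma reduce_eq (N : Net Nq Ns Nm) (hA1 : N.A1) {i j : Fin Nm} (hij : i ≠ j)
    (y x : ({q : Fin Nq // N.node q = i} → Fin 2) × ({q : Fin Nq // N.node q = j} → Fin 2)) :
    N.reducePair i j N.ghzState y x = ((2 : ℂ) ^ Ns)⁻¹ *
      ∑ c : Fin Ns → Fin 2, ∑ c' : Fin Ns → Fin 2,
        if y = (rs N _ c, rs N _ c) then
          if x = (rs N _ c', rs N _ c') then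
            if rs N (fun q => N.node q ≠ i ∧ N.node q ≠ j) c = rs N _ c' then 1 else 0
          else 0
        else 0 := by
  have hs : (((Real.sqrt 2 : ℝ) : ℂ)⁻¹) ^ Ns * star ((((Real.sqrt 2 : ℝ) : ℂ)⁻¹) ^ Ns)
      = ((2 : ℂ) ^ Ns)⁻¹ := by
    rw [Complex.star_def, map_pow, map_inv₀, Complex.conj_ofReal, ← mul_pow, ← mul_inv,
      ← Complex.ofReal_mul, Real.mul_self_sqrt (by norm_num), inv_pow]
    norm_num
  simp only [Net.reducePair, Net.ghzState, Matrix.of_apply, ghzVec_eq N hA1, merge_iff N hij]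
  rw [Finset.sum_congr rfl fun z _ => by rw [star_mul', mul_mul_mul_comm, hs]]
  rw [← Finset.mul_sum]
  congr 1
  simp only [star_sum, Finset.sum_mul_sum]
  rw [Finset.sum_comm]
  refine Finset.sum_congr rfl fun c _ => ?_
  rw [Finset.sum_comm]
  refine Finset.sum_congr rfl fun c' _ => ?_
  by_cases h1 : y = (rs N _ c, rs N _ c)
  · by_cases h2 : x = (rs N _ c', rs N _ c')
    · simp only [h1, h2, true_and, if_true]
      simp [eq_comm]
    · simp [h2]
  · simp [h1]

lemma trace_eq (N : Net Nq Ns Nm) (hA1 : N.A1) {i j : Fin Nm} (hij : i ≠ j)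
    (M : Matrix (({q : Fin Nq // N.node q = i} → Fin 2) × ({q : Fin Nq // N.node q = j} → Fin 2))
      (({q : Fin Nq // N.node q = i} → Fin 2) × ({q : Fin Nq // N.node q = j} → Fin 2)) ℂ) :
    (M * N.reducePair i j N.ghzState).trace = ((2 : ℂ) ^ Ns)⁻¹ *
      ∑ c : Fin Ns → Fin 2, ∑ c' : Fin Ns → Fin 2,
        if rs N (fun q => N.node q ≠ i ∧ N.node q ≠ j) c = rs N _ c' then
          M (rs N _ c', rs N _ c') (rs N _ c, rs N _ c) else 0 := by
  simp only [Matrix.trace, Matrix.diag, Matrix.mul_apply]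
  have e : ∀ x y, M x y * N.reducePair i j N.ghzState y x = ((2 : ℂ) ^ Ns)⁻¹ *
      ∑ c : Fin Ns → Fin 2, ∑ c' : Fin Ns → Fin 2, M x y *
        if y = (rs N _ c, rs N _ c) then
          if x = (rs N _ c', rs N _ c') then
            if rs N (fun q => N.node q ≠ i ∧ N.node q ≠ j) c = rs N _ c' then 1 else 0
          else 0
        else 0 := by
    intro x y
    rw [reduce_eq N hA1 hij, mul_left_comm, Finset.mul_sum]
    congr 1
    exact Finset.sum_congr rfl fun c _ => Finset.mul_sum _ _ _
  rw [Finset.sum_congr rfl fun x _ => Finset.sum_congr rfl fun y _ => e x y]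
  rw [Finset.sum_congr rfl fun x _ => (Finset.mul_sum _ _ _).symm, ← Finset.mul_sum]
  congr 1
  rw [Finset.sum_congr rfl (fun x _ => Finset.sum_comm), Finset.sum_comm]
  refine Finset.sum_congr rfl fun c _ => ?_
  rw [Finset.sum_congr rfl (fun x _ => Finset.sum_comm), Finset.sum_comm]
  refine Finset.sum_congr rfl fun c' _ => ?_
  simp

lemma count_fixed (S : Finset (Fin Ns)) (d : Fin Ns → Fin 2) :
    ((Finset.univ.filter fun c : Fin Ns → Fin 2 => ∀ s ∈ S, c s = d s).card : ℝ)
      = 2 ^ Ns * (2 ^ S.card)⁻¹ := by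
  have : (Finset.univ.filter fun c : Fin Ns → Fin 2 => ∀ s ∈ S, c s = d s)
      = Fintype.piFinset (fun s => if s ∈ S then {d s} else Finset.univ) := by
    ext c
    simp only [Finset.mem_filter, Finset.mem_univ, true_and, Fintype.mem_piFinset]
    refine forall_congr' fun s => ?_
    by_cases h : s ∈ S <;> simp [h]
  rw [this, Fintype.card_piFinset]
  have e : ∀ s, (if s ∈ S then ({d s} : Finset (Fin 2)) else Finset.univ).card
      = if s ∈ S then 1 else 2 := by
    intro s; by_cases h : s ∈ S <;> simp [h]
  simp only [e]
  rw [Finset.prod_ite]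
  simp only [Finset.prod_const, one_pow, one_mul]
  rw [eq_mul_inv_iff_mul_eq₀ (by positivity)]
  push_cast
  rw [← pow_add]
  congr 1
  have := Finset.card_filter_add_card_filter_not (s := (Finset.univ : Finset (Fin Ns))) (fun s => s ∈ S)
  simp only [Finset.filter_mem_eq_inter, Finset.univ_inter, Finset.card_univ, Fintype.card_fin] at this
  omega

def SA (N : Net Nq Ns Nm) (i : Fin Nm) : Finset (Fin Ns) :=
  Finset.univ.filter fun k => ∃ q, N.src q = k ∧ N.node q = i

lemma mem_SA {N : Net Nq Ns Nm} {i : Fin Nm} {k : Fin Ns} :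
    k ∈ SA N i ↔ ∃ q, N.src q = k ∧ N.node q = i := by simp [SA]

lemma rs_eq_iff (N : Net Nq Ns Nm) (i : Fin Nm) (c d : Fin Ns → Fin 2) :
    rs N (fun q => N.node q = i) c = rs N _ d ↔ ∀ s ∈ SA N i, c s = d s := by
  constructor
  · intro h s hs
    obtain ⟨q, rfl, hq⟩ := mem_SA.1 hs
    exact congrFun h ⟨q, hq⟩
  · intro h
    funext ⟨q, hq⟩
    exact h _ (mem_SA.2 ⟨q, rfl, hq⟩)

lemma rs_surj (N : Net Nq Ns Nm) (hA2 : N.A2) (i : Fin Nm) :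
    Function.Surjective (rs N (fun q => N.node q = i)) := by
  intro u
  have hinj : Function.Injective (fun q : {q // N.node q = i} => N.src q.1) := by
    rintro ⟨q, hq⟩ ⟨q', hq'⟩ h
    have : q = q' := hA2 (by simp only [Prod.mk.injEq]; exact ⟨h, by rw [hq, hq']⟩)
    exact Subtype.ext this
  refine ⟨Function.extend (fun q : {q // N.node q = i} => N.src q.1) u (fun _ => 0), ?_⟩
  funext q
  exact hinj.extend_apply u _ q

lemma shared_eq (N : Net Nq Ns Nm) (i j : Fin Nm) :
    (SA N i ∪ SA N j).card + N.nShared i j = (SA N i).card + (SA N j).card := by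
  rw [← Finset.card_union_add_card_inter]
  congr 1
  rw [Net.nShared, Fintype.card_subtype]
  congr 1
  ext k
  simp [mem_SA]

/-- a source not meeting the other nodes meets both `i` and `j` -/
lemma source_cases (N : Net Nq Ns Nm) (hA1 : N.A1) (hA2 : N.A2) (i j : Fin Nm) (k : Fin Ns) :
    (∃ q, N.src q = k ∧ (N.node q ≠ i ∧ N.node q ≠ j)) ∨ (k ∈ SA N i ∧ k ∈ SA N j) := by
  by_contra! h
  obtain ⟨h1, h2⟩ := h
  have hc : 1 < Fintype.card {q : Fin Nq // N.src q = k} := hA1 k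
  obtain ⟨⟨a, ha⟩, ⟨b, hb⟩, hab⟩ := Fintype.one_lt_card_iff.1 hc
  have hab' : N.node a ≠ N.node b := fun h => hab (Subtype.ext (hA2 (by simp [ha, hb, h])))
  have ca : N.node a = i ∨ N.node a = j := by
    by_cases h : N.node a = i
    · exact Or.inl h
    · exact Or.inr (h1 a ha h)
  have cb : N.node b = i ∨ N.node b = j := by
    by_cases h : N.node b = i
    · exact Or.inl h
    · exact Or.inr (h1 b hb h)
  rcases ca with ca | ca <;> rcases cb with cb | cb
  · exact hab' (by rw [ca, cb])
  · exact h2 (mem_SA.2 ⟨a, ha, ca⟩) (mem_SA.2 ⟨b, hb, cb⟩)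
  · exact h2 (mem_SA.2 ⟨b, hb, cb⟩) (mem_SA.2 ⟨a, ha, ca⟩)
  · exact hab' (by rw [ca, cb])

lemma rsZ_eq (N : Net Nq Ns Nm) {i j : Fin Nm} {c d : Fin Ns → Fin 2}
    (h : rs N (fun q => N.node q ≠ i ∧ N.node q ≠ j) c = rs N _ d) {k : Fin Ns}
    (hk : ∃ q, N.src q = k ∧ (N.node q ≠ i ∧ N.node q ≠ j)) : c k = d k := by
  obtain ⟨q, rfl, hq⟩ := hk
  exact congrFun h ⟨q, hq⟩

lemma eq_of_Z_A (N : Net Nq Ns Nm) (hA1 : N.A1) (hA2 : N.A2) {i j : Fin Nm} {c d : Fin Ns → Fin 2}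
    (h : rs N (fun q => N.node q ≠ i ∧ N.node q ≠ j) c = rs N _ d)
    (h' : rs N (fun q => N.node q = i) c = rs N _ d) : c = d := by
  funext k
  rcases source_cases N hA1 hA2 i j k with hk | hk
  · exact rsZ_eq N h hk
  · exact (rs_eq_iff N i c d).1 h' k hk.1

lemma eq_of_Z_B (N : Net Nq Ns Nm) (hA1 : N.A1) (hA2 : N.A2) {i j : Fin Nm} {c d : Fin Ns → Fin 2}
    (h : rs N (fun q => N.node q ≠ i ∧ N.node q ≠ j) c = rs N _ d)
    (h' : rs N (fun q => N.node q = j) c = rs N _ d) : c = d := by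
  funext k
  rcases source_cases N hA1 hA2 i j k with hk | hk
  · exact rsZ_eq N h hk
  · exact (rs_eq_iff N j c d).1 h' k hk.2

lemma sum_rs (N : Net Nq Ns Nm) (hA2 : N.A2) (i : Fin Nm)
    (f : ({q : Fin Nq // N.node q = i} → Fin 2) → ℂ) :
    ∑ c : Fin Ns → Fin 2, f (rs N _ c) = 2 ^ Ns * (2 ^ (SA N i).card)⁻¹ * ∑ u, f u := by
  rw [← Finset.sum_fiberwise_of_maps_to (s := Finset.univ) (t := Finset.univ)
    (g := rs N (fun q => N.node q = i)) (fun _ _ => Finset.mem_univ _), Finset.mul_sum]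
  refine Finset.sum_congr rfl fun u _ => ?_
  obtain ⟨d, rfl⟩ := rs_surj N hA2 i u
  rw [Finset.sum_congr rfl (g := fun _ => f (rs N _ d))
    (fun c hc => by rw [(Finset.mem_filter.1 hc).2])]
  rw [Finset.sum_const, nsmul_eq_mul]
  congr 1
  simp only [rs_eq_iff]
  have := congrArg (fun r : ℝ => (r : ℂ)) (count_fixed (SA N i) d)
  push_cast at this
  exact this

lemma margA (N : Net Nq Ns Nm) (hA1 : N.A1) (hA2 : N.A2) {i j : Fin Nm} (hij : i ≠ j)
    (P : Matrix ({q : Fin Nq // N.node q = i} → Fin 2) ({q : Fin Nq // N.node q = i} → Fin 2) ℂ) :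
    ((P ⊗ₖ (1 : Matrix ({q : Fin Nq // N.node q = j} → Fin 2) _ ℂ)) *
      N.reducePair i j N.ghzState).trace = (2 ^ (SA N i).card)⁻¹ * P.trace := by
  rw [trace_eq N hA1 hij]
  rw [Finset.sum_congr rfl (g := fun c => P (rs N _ c) (rs N _ c))]
  · rw [sum_rs N hA2 i (fun u => P u u), ← mul_assoc, ← mul_assoc, inv_mul_cancel₀ (pow_ne_zero _ two_ne_zero), one_mul]
    rfl
  · intro c _
    rw [Finset.sum_eq_single c]
    · simp
    · intro c' _ hc
      split_ifs with h
      · rw [Matrix.kronecker_apply, Matrix.one_apply_ne, mul_zero]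
        exact fun h' => hc (eq_of_Z_B N hA1 hA2 h h'.symm).symm
      · rfl
    · simp

lemma margB (N : Net Nq Ns Nm) (hA1 : N.A1) (hA2 : N.A2) {i j : Fin Nm} (hij : i ≠ j)
    (Q : Matrix ({q : Fin Nq // N.node q = j} → Fin 2) ({q : Fin Nq // N.node q = j} → Fin 2) ℂ) :
    (((1 : Matrix ({q : Fin Nq // N.node q = i} → Fin 2) _ ℂ) ⊗ₖ Q) *
      N.reducePair i j N.ghzState).trace = (2 ^ (SA N j).card)⁻¹ * Q.trace := by
  rw [trace_eq N hA1 hij]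
  rw [Finset.sum_congr rfl (g := fun c => Q (rs N _ c) (rs N _ c))]
  · rw [sum_rs N hA2 j (fun u => Q u u), ← mul_assoc, ← mul_assoc, inv_mul_cancel₀ (pow_ne_zero _ two_ne_zero), one_mul]
    rfl
  · intro c _
    rw [Finset.sum_eq_single c]
    · simp
    · intro c' _ hc
      split_ifs with h
      · rw [Matrix.kronecker_apply, Matrix.one_apply_ne, zero_mul]
        exact fun h' => hc (eq_of_Z_A N hA1 hA2 h h'.symm).symm
      · rfl
    · simp

lemma pair_count (N : Net Nq Ns Nm) (hA1 : N.A1) (hA2 : N.A2) (i j : Fin Nm)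
    (u : {q : Fin Nq // N.node q = i} → Fin 2) (v : {q : Fin Nq // N.node q = j} → Fin 2) :
    (((Finset.univ.filter fun p : (Fin Ns → Fin 2) × (Fin Ns → Fin 2) =>
      rs N (fun q => N.node q ≠ i ∧ N.node q ≠ j) p.1 = rs N _ p.2).filter fun p =>
        (rs N _ p.1, rs N _ p.2) = (u, v)).card : ℝ) ≤ 2 ^ Ns * (2 ^ (SA N i ∪ SA N j).card)⁻¹ := by
  rw [← count_fixed _ (fun _ => 0)]
  rw [Nat.cast_le]
  refine Finset.card_le_card_of_injOn
    (fun p k => if k ∈ SA N i ∪ SA N j then 0 else p.1 k) ?_ ?_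
  · intro p _
    simp only [Finset.coe_filter, Finset.mem_univ, true_and, Set.mem_setOf_eq]
    intro s hs
    rw [if_pos hs]
  · rintro ⟨c, c'⟩ hc ⟨d, d'⟩ hd h
    simp only [Finset.coe_filter, Finset.mem_filter, Finset.mem_univ, true_and, Set.mem_setOf_eq,
      Prod.mk.injEq] at hc hd
    obtain ⟨hcZ, hcA, hcB⟩ := hc
    obtain ⟨hdZ, hdA, hdB⟩ := hd
    have eA := (rs_eq_iff N i c d).1 (hcA.trans hdA.symm)
    have eB := (rs_eq_iff N j c' d').1 (hcB.trans hdB.symm)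
    have key : ∀ k, c k = d k ∧ c' k = d' k := by
      intro k
      rcases source_cases N hA1 hA2 i j k with hk | hk
      · have e1 := rsZ_eq N hcZ hk
        have e2 := rsZ_eq N hdZ hk
        by_cases h1 : k ∈ SA N i
        · have := eA k h1
          exact ⟨this, by rw [← e1, ← e2, this]⟩
        by_cases h2 : k ∈ SA N j
        · have := eB k h2
          exact ⟨by rw [e1, e2, this], this⟩
        have := congrFun h k
        simp only [Finset.mem_union, h1, h2, or_self, if_false] at this
        exact ⟨this, by rw [← e1, ← e2, this]⟩
      · exact ⟨eA k hk.1, eB k hk.2⟩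
    exact Prod.ext (funext fun k => (key k).1) (funext fun k => (key k).2)

lemma joint_bound (N : Net Nq Ns Nm) (hA1 : N.A1) (hA2 : N.A2) {i j : Fin Nm} (hij : i ≠ j)
    {P : Matrix ({q : Fin Nq // N.node q = i} → Fin 2) ({q : Fin Nq // N.node q = i} → Fin 2) ℂ}
    {Q : Matrix ({q : Fin Nq // N.node q = j} → Fin 2) ({q : Fin Nq // N.node q = j} → Fin 2) ℂ}
    (hP : P.PosSemidef) (hQ : Q.PosSemidef) :
    ((P ⊗ₖ Q) * N.reducePair i j N.ghzState).trace.re ≤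
      (2 ^ (SA N i ∪ SA N j).card)⁻¹ * (P.trace.re * Q.trace.re) := by
  rw [trace_eq N hA1 hij]
  have e2 : ((2 : ℂ) ^ Ns)⁻¹ = (((2 : ℝ) ^ Ns)⁻¹ : ℝ) := by push_cast; rfl
  rw [e2, Complex.re_ofReal_mul, Complex.re_sum]
  simp only [Complex.re_sum]
  set F : (Fin Ns → Fin 2) → (Fin Ns → Fin 2) → ℝ := fun c c' =>
    if rs N (fun q => N.node q ≠ i ∧ N.node q ≠ j) c = rs N _ c' then
      (P (rs N _ c) (rs N _ c)).re * (Q (rs N _ c') (rs N _ c')).re else 0 with hF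
  have step1 : ∑ c : Fin Ns → Fin 2, ∑ c' : Fin Ns → Fin 2,
      (if rs N (fun q => N.node q ≠ i ∧ N.node q ≠ j) c = rs N _ c' then
          (P ⊗ₖ Q) (rs N _ c', rs N _ c') (rs N _ c, rs N _ c) else 0).re
      ≤ ∑ c, ∑ c', (F c c' + F c' c) / 2 := by
    refine Finset.sum_le_sum fun c _ => Finset.sum_le_sum fun c' _ => ?_
    by_cases h : rs N (fun q => N.node q ≠ i ∧ N.node q ≠ j) c = rs N _ c'
    · simp only [hF, h, if_true, Matrix.kronecker_apply]
      refine (entry_bound hP hQ _ _ _ _).trans ?_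
      linarith
    · simp [hF, h, Ne.symm h]
  have step2 : ∑ c, ∑ c', (F c c' + F c' c) / 2 = ∑ c, ∑ c', F c c' := by
    simp only [← Finset.sum_div, Finset.sum_add_distrib]
    rw [Finset.sum_comm (f := fun c c' => F c' c)]
    ring
  have step3 : ∑ c, ∑ c', F c c' ≤
      2 ^ Ns * (2 ^ (SA N i ∪ SA N j).card)⁻¹ * (P.trace.re * Q.trace.re) := by
    rw [← Fintype.sum_prod_type' F]
    simp only [hF]
    rw [← Finset.sum_filter]
    rw [← Finset.sum_fiberwise_of_maps_to (t := Finset.univ)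
      (g := fun p : (Fin Ns → Fin 2) × (Fin Ns → Fin 2) =>
        (rs N (fun q => N.node q = i) p.1, rs N (fun q => N.node q = j) p.2))
      (fun _ _ => Finset.mem_univ _)]
    simp only [Matrix.trace, Matrix.diag, Complex.re_sum]
    rw [Finset.sum_mul_sum, ← Fintype.sum_prod_type' (fun u v => (P u u).re * (Q v v).re),
      Finset.mul_sum]
    refine Finset.sum_le_sum ?_
    rintro ⟨u, v⟩ _
    rw [Finset.sum_congr rfl (g := fun _ => (P u u).re * (Q v v).re)]
    · rw [Finset.sum_const, nsmul_eq_mul]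
      exact mul_le_mul_of_nonneg_right (pair_count N hA1 hA2 i j u v)
        (mul_nonneg (psd_diag hP u).1 (psd_diag hQ v).1)
    · intro p hp
      have := (Finset.mem_filter.1 hp).2
      simp only [Prod.mk.injEq] at this
      rw [this.1, this.2]
  calc _ ≤ ((2 : ℝ) ^ Ns)⁻¹ * (2 ^ Ns * (2 ^ (SA N i ∪ SA N j).card)⁻¹ * (P.trace.re * Q.trace.re)) :=
        mul_le_mul_of_nonneg_left (step1.trans (step2.le.trans step3)) (by positivity)
    _ = _ := by field_simp

lemma reduce_psd (N : Net Nq Ns Nm) (i j : Fin Nm) :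
    (N.reducePair i j N.ghzState).PosSemidef := by
  have : N.reducePair i j N.ghzState =
      ∑ z, Matrix.vecMulVec (fun x => N.ghzVec (N.mergePair i j x z))
        (star (fun x => N.ghzVec (N.mergePair i j x z))) := by
    ext x y
    simp [Net.reducePair, Net.ghzState, Matrix.sum_apply, Matrix.vecMulVec_apply]
  rw [this]
  exact Matrix.posSemidef_sum _ fun z _ => Matrix.posSemidef_vecMulVec_self_star _

lemma proj_trace_nonneg {d : Type*} [Fintype d] [DecidableEq d] {R ρ : Matrix d d ℂ}
    (h : R.IsHermitian) (hi : R * R = R) (hρ : ρ.PosSemidef) : 0 ≤ (R * ρ).trace.re := by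
  have h1 := (hρ.mul_mul_conjTranspose_same R).trace_nonneg
  rw [h.eq, Matrix.trace_mul_comm, ← mul_assoc, hi] at h1
  exact (Complex.le_def.1 h1).1

lemma joint_nonneg (N : Net Nq Ns Nm) (i j : Fin Nm) {ιA ιB : Type*}
    (P : PVM ιA ({q : Fin Nq // N.node q = i} → Fin 2))
    (Q : PVM ιB ({q : Fin Nq // N.node q = j} → Fin 2)) (ab : ιA × ιB) :
    0 ≤ jointProb P Q (N.reducePair i j N.ghzState) ab := by
  refine proj_trace_nonneg ?_ ?_ (reduce_psd N i j)
  · rw [Matrix.IsHermitian, Matrix.conjTranspose_kronecker, (P.herm _).eq, (Q.herm _).eq]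
  · rw [← Matrix.mul_kronecker_mul, P.idem, Q.idem]

lemma sum_joint_right {dA dB ιA ιB : Type*} [Fintype dA] [DecidableEq dA] [Fintype dB]
    [DecidableEq dB] (P : PVM ιA dA) (Q : PVM ιB dB)
    (ρ : Matrix (dA × dB) (dA × dB) ℂ) (a : ιA) :
    letI := Q.fintype
    ∑ b, jointProb P Q ρ (a, b) = ((P.proj a ⊗ₖ (1 : Matrix dB dB ℂ)) * ρ).trace.re := by
  letI := Q.fintype
  have e : P.proj a ⊗ₖ (1 : Matrix dB dB ℂ) = ∑ b, P.proj a ⊗ₖ Q.proj b := by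
    rw [← Q.complete]
    ext ⟨x, x'⟩ ⟨y, y'⟩
    simp only [Matrix.kronecker_apply, Matrix.sum_apply, Finset.mul_sum]
  rw [e, Finset.sum_mul, Matrix.trace_sum, Complex.re_sum]
  rfl

lemma sum_joint_left {dA dB ιA ιB : Type*} [Fintype dA] [DecidableEq dA] [Fintype dB]
    [DecidableEq dB] (P : PVM ιA dA) (Q : PVM ιB dB)
    (ρ : Matrix (dA × dB) (dA × dB) ℂ) (b : ιB) :
    letI := P.fintype
    ∑ a, jointProb P Q ρ (a, b) = (((1 : Matrix dA dA ℂ) ⊗ₖ Q.proj b) * ρ).trace.re := by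
  letI := P.fintype
  have e : (1 : Matrix dA dA ℂ) ⊗ₖ Q.proj b = ∑ a, P.proj a ⊗ₖ Q.proj b := by
    rw [← P.complete]
    ext ⟨x, x'⟩ ⟨y, y'⟩
    simp only [Matrix.kronecker_apply, Matrix.sum_apply, Finset.sum_mul]
  rw [e, Finset.sum_mul, Matrix.trace_sum, Complex.re_sum]
  rfl

lemma re_inv_pow_mul (n : ℕ) (z : ℂ) : (((2 : ℂ) ^ n)⁻¹ * z).re = ((2 : ℝ) ^ n)⁻¹ * z.re := by
  have e2 : ((2 : ℂ) ^ n)⁻¹ = (((2 : ℝ) ^ n)⁻¹ : ℝ) := by push_cast; rfl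
  rw [e2, Complex.re_ofReal_mul]

lemma logb_inv_pow (n : ℕ) : Real.logb 2 (((2 : ℝ) ^ n)⁻¹) = -(n : ℝ) := by
  rw [Real.logb_inv, Real.logb_pow]; simp

lemma sum_joint (N : Net Nq Ns Nm) (hA1 : N.A1) (hA2 : N.A2) {i j : Fin Nm} (hij : i ≠ j)
    {ιA ιB : Type*}
    (P : PVM ιA ({q : Fin Nq // N.node q = i} → Fin 2))
    (Q : PVM ιB ({q : Fin Nq // N.node q = j} → Fin 2)) :
    letI := P.fintype; letI := Q.fintype
    ∑ a, ∑ b, jointProb P Q (N.reducePair i j N.ghzState) (a, b) = 1 := by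
  letI := P.fintype; letI := Q.fintype
  have hc : (SA N i).card = Fintype.card {q : Fin Nq // N.node q = i} := by
    have : SA N i = Finset.univ.image (fun q : {q // N.node q = i} => N.src q.1) := by
      ext k
      simp only [mem_SA, Finset.mem_image, Finset.mem_univ, true_and, Subtype.exists]
      constructor
      · rintro ⟨q, h, h'⟩; exact ⟨q, h', h⟩
      · rintro ⟨q, h, h'⟩; exact ⟨q, h', h⟩
    rw [this, Finset.card_image_of_injective, Finset.card_univ]
    rintro ⟨q, hq⟩ ⟨q', hq'⟩ h
    have : q = q' := hA2 (by simp only [Prod.mk.injEq]; exact ⟨h, by rw [hq, hq']⟩)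
    exact Subtype.ext this
  simp only [sum_joint_right, margA N hA1 hA2 hij, re_inv_pow_mul]
  rw [← Finset.mul_sum, ← Complex.re_sum, ← Matrix.trace_sum, P.complete, Matrix.trace_one, hc, Complex.natCast_re]
  simp

lemma mi_le (N : Net Nq Ns Nm) (hA1 : N.A1) (hA2 : N.A2) {i j : Fin Nm} (hij : i ≠ j)
    {ιA ιB : Type*}
    (P : PVM ιA ({q : Fin Nq // N.node q = i} → Fin 2))
    (Q : PVM ιB ({q : Fin Nq // N.node q = j} → Fin 2)) :
    miOf P Q (N.reducePair i j N.ghzState) ≤ N.nShared i j := by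
  letI := P.fintype; letI := Q.fintype
  have hn : ((SA N i ∪ SA N j).card : ℝ) + N.nShared i j = (SA N i).card + (SA N j).card := by
    exact_mod_cast shared_eq N i j
  unfold miOf
  rw [mi_formula]
  rw [← mul_one (N.nShared i j : ℝ), ← sum_joint N hA1 hA2 hij P Q, Finset.mul_sum]
  refine Finset.sum_le_sum fun a _ => ?_
  rw [Finset.mul_sum]
  refine Finset.sum_le_sum fun b _ => ?_
  rw [sum_joint_right, sum_joint_left, margA N hA1 hA2 hij, margB N hA1 hA2 hij, re_inv_pow_mul,
    re_inv_pow_mul, mul_comm (N.nShared i j : ℝ)]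
  have hp := joint_nonneg N i j P Q (a, b)
  rcases hp.eq_or_lt with h0 | h0
  · rw [← h0]; simp
  refine mul_le_mul_of_nonneg_left ?_ hp
  have hP := proj_psd (P.herm a) (P.idem a)
  have hQ := proj_psd (Q.herm b) (Q.idem b)
  have hb : jointProb P Q (N.reducePair i j N.ghzState) (a, b) ≤ _ :=
    joint_bound N hA1 hA2 hij hP hQ
  have tP : 0 ≤ (P.proj a).trace.re := (Complex.le_def.1 hP.trace_nonneg).1
  have tQ : 0 ≤ (Q.proj b).trace.re := (Complex.le_def.1 hQ.trace_nonneg).1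
  have hlt := pos_of_mul_pos_right (h0.trans_le hb) (by positivity)
  have tP' : (P.proj a).trace.re ≠ 0 := fun h => by simp [h] at hlt
  have tQ' : (Q.proj b).trace.re ≠ 0 := fun h => by simp [h] at hlt
  have hl := Real.logb_le_logb_of_le (b := 2) (by norm_num) h0 hb
  rw [Real.logb_mul (by positivity) (mul_ne_zero tP' tQ'), Real.logb_mul tP' tQ',
    logb_inv_pow] at hl
  rw [Real.logb_mul (by positivity) tP', Real.logb_mul (by positivity) tQ', logb_inv_pow,
    logb_inv_pow]
  linarith

lemma comp_joint (N : Net Nq Ns Nm) (hA1 : N.A1) (hA2 : N.A2) {i j : Fin Nm} (hij : i ≠ j)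
    (u : {q : Fin Nq // N.node q = i} → Fin 2) (v : {q : Fin Nq // N.node q = j} → Fin 2) :
    jointProb (compPVM _) (compPVM _) (N.reducePair i j N.ghzState) (u, v) = 0 ∨
    jointProb (compPVM _) (compPVM _) (N.reducePair i j N.ghzState) (u, v)
      = (2 ^ (SA N i ∪ SA N j).card)⁻¹ := by
  have h : jointProb (compPVM _) (compPVM _) (N.reducePair i j N.ghzState) (u, v)
      = ((2 : ℝ) ^ Ns)⁻¹ * ((Finset.univ.filter fun c : Fin Ns → Fin 2 =>
        rs N _ c = u ∧ rs N _ c = v).card : ℝ) := by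
    unfold jointProb
    rw [trace_eq N hA1 hij, re_inv_pow_mul]
    congr 1
    rw [Finset.card_filter]
    push_cast
    rw [Complex.re_sum]
    refine Finset.sum_congr rfl fun c _ => ?_
    rw [Finset.sum_eq_single c]
    · by_cases h1 : rs N _ c = u <;> by_cases h2 : rs N _ c = v <;>
        simp [compPVM, Matrix.kronecker_apply, h1, h2]
    · intro c' _ hc
      split_ifs with h
      · have h1 : rs N (fun q => N.node q = i) c' ≠ rs N _ c :=
          fun h' => hc (eq_of_Z_A N hA1 hA2 h h'.symm).symm
        simp [compPVM, Matrix.kronecker_apply, Matrix.diagonal_apply_ne _ h1]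
      · rfl
    · simp
  rw [h]
  by_cases hd : ∃ d : Fin Ns → Fin 2, rs N _ d = u ∧ rs N _ d = v
  · obtain ⟨d, rfl, rfl⟩ := hd
    right
    have e : (Finset.univ.filter fun c : Fin Ns → Fin 2 =>
        rs N (fun q => N.node q = i) c = rs N _ d ∧ rs N (fun q => N.node q = j) c = rs N _ d)
        = (Finset.univ.filter fun c : Fin Ns → Fin 2 => ∀ s ∈ SA N i ∪ SA N j, c s = d s) := by
      ext c
      simp only [Finset.mem_filter, Finset.mem_univ, true_and, rs_eq_iff, Finset.mem_union,
        or_imp, forall_and]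
    rw [e, count_fixed, ← mul_assoc, inv_mul_cancel₀ (by positivity), one_mul]
  · left
    rw [Finset.filter_false_of_mem, Finset.card_empty, Nat.cast_zero, mul_zero]
    exact fun c _ hc => hd ⟨c, hc⟩

lemma comp_trace {d : Type*} [Fintype d] [DecidableEq d] (x : d) :
    ((compPVM d).proj x).trace = 1 := by
  simp [compPVM, Matrix.trace]

lemma mi_comp (N : Net Nq Ns Nm) (hA1 : N.A1) (hA2 : N.A2) {i j : Fin Nm} (hij : i ≠ j) :
    miOf (compPVM ({q : Fin Nq // N.node q = i} → Fin 2))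
        (compPVM ({q : Fin Nq // N.node q = j} → Fin 2))
        (N.reducePair i j N.ghzState) = N.nShared i j := by
  have hn : ((SA N i ∪ SA N j).card : ℝ) + N.nShared i j = (SA N i).card + (SA N j).card := by
    exact_mod_cast shared_eq N i j
  unfold miOf
  rw [mi_formula]
  rw [← mul_one (N.nShared i j : ℝ), ← sum_joint N hA1 hA2 hij (compPVM _) (compPVM _),
    Finset.mul_sum]
  refine Finset.sum_congr rfl fun a _ => ?_
  rw [Finset.mul_sum]
  refine Finset.sum_congr rfl fun b _ => ?_
  rw [sum_joint_right, sum_joint_left, margA N hA1 hA2 hij, margB N hA1 hA2 hij, re_inv_pow_mul,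
    re_inv_pow_mul, comp_trace, comp_trace, Complex.one_re, mul_one, mul_one, logb_inv_pow,
    logb_inv_pow]
  rcases comp_joint N hA1 hA2 hij a b with h | h
  · rw [h]; simp
  · rw [h, logb_inv_pow]
    rw [mul_comm]
    congr 1
    linarith

end MMI

/-- in a GHZ network satisfying Assumptions A1 and A2, the measured
mutual information between two distinct nodes equals the number of sources they share,
and the supremum is attained by the computational-basis measurement at both nodes. -/
theorem measured_mutual_information_counts_shared_sources
    {Nq Ns Nm : ℕ} (N : Net Nq Ns Nm) (hA1 : N.A1) (hA2 : N.A2)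
    (i j : Fin Nm) (hij : i ≠ j) :
    measuredMI (N.reducePair i j N.ghzState) = (N.nShared i j : ℝ) ∧
    miOf (compPVM ({q : Fin Nq // N.node q = i} → Fin 2))
        (compPVM ({q : Fin Nq // N.node q = j} → Fin 2))
        (N.reducePair i j N.ghzState)
      = (N.nShared i j : ℝ) := by
  refine ⟨?_, MMI.mi_comp N hA1 hA2 hij⟩
  refine IsGreatest.csSup_eq ⟨?_, ?_⟩
  · exact ⟨_, _, _, _, (MMI.mi_comp N hA1 hA2 hij).symm⟩
  · rintro r ⟨ιA, ιB, P, Q, rfl⟩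
    exact MMI.mi_le N hA1 hA2 hij P Q

end
end

section
/- Let a quantum network satisfy Assumptions A1 and A2, and treat each qubit as its own measurement node. Define the qubit characteristic matrix Q, of size N_q × N_q, by Q_{ii} = S(ρ_{q_i}) and Q_{ij} = I_m(q_i; q_j) for i ≠ j, where ρ_{q_i} is the single-qubit reduced state. Then: (i) Q_{ii} = 1 for all i; (ii) for i ≠ j, Q_{ij} = 1 if qubits q_i and q_j come from the same source and Q_{ij} = 0 otherwise; (iii) two rows of Q are equal if and only if the corresponding qubits come from the same source; and (iv) the number of distinct rows of Q equals the number of sources N_s. In particular, Q completely determines the network topology. -/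
open scoped Kronecker Matrix Classical

noncomputable section

/-- The qubit characteristic matrix of a network in which every qubit is its own
measurement node: single-qubit von Neumann entropies on the diagonal and pairwise
measured mutual informations off the diagonal. -/
def qubitCharMatrix {Nq Ns : ℕ} (N : Net Nq Ns Nq) : Fin Nq → Fin Nq → ℝ :=
  fun i j =>
    if i = j then vnEntropy (N.reduceNode i N.ghzState)
    else measuredMI (N.reducePair i j N.ghzState)

lemma vn_half {d : Type*} [Fintype d] [DecidableEq d] (ρ : Matrix d d ℂ)
    (hρ : ∀ x y, ρ x y = if x = y then 1/2 else 0) (hd : Fintype.card d = 2) :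
    vnEntropy ρ = 1 := by
  have e : ρ = (1/2 : ℂ) • 1 := by
    ext x y
    rw [hρ]; simp [Matrix.one_apply]
  have hH : ρ.IsHermitian := by
    ext x y
    simp only [Matrix.conjTranspose_apply, hρ]
    by_cases h : x = y
    · simp [h]
    · simp [h, Ne.symm h]
  have hev : ∀ k, hH.eigenvalues k = 1/2 := by
    intro k
    have h1 := hH.mulVec_eigenvectorBasis k
    have hne : hH.eigenvectorBasis k ≠ 0 := hH.eigenvectorBasis.orthonormal.ne_zero k
    obtain ⟨x, hx⟩ : ∃ x, hH.eigenvectorBasis k x ≠ 0 := by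
      by_contra hcon
      push Not at hcon
      exact hne (PiLp.ext hcon)
    have h2 := congrFun h1 x
    have h3 : (ρ *ᵥ (hH.eigenvectorBasis k)) x = (1/2 : ℂ) * hH.eigenvectorBasis k x := by
      have h6 : ∀ v : d → ℂ, (ρ *ᵥ v) x = (1/2 : ℂ) * v x := by
        intro v
        rw [e]
        simp [Matrix.smul_mulVec]
      exact h6 _
    rw [h3] at h2
    simp only [Pi.smul_apply, Complex.real_smul] at h2
    have h4 := mul_right_cancel₀ hx h2
    have h5 := congrArg Complex.re h4
    norm_num at h5
    linarith
  unfold vnEntropy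
  rw [dif_pos hH]
  simp only [hev]
  simp [hd, Real.logb_inv]

lemma shannon_marg_le {α β : Type*} [Fintype α] [Fintype β] (p : α × β → ℝ) (hp : ∀ x, 0 ≤ p x) :
    shannon (fun b => ∑ a, p (a, b)) ≤ shannon p := by
  unfold shannon
  rw [neg_le_neg_iff, Fintype.sum_prod_type_right]
  refine Finset.sum_le_sum fun b _ => ?_
  rw [Finset.sum_mul]
  refine Finset.sum_le_sum fun a _ => ?_
  have hle : p (a, b) ≤ ∑ a, p (a, b) :=
    Finset.single_le_sum (f := fun a => p (a, b)) (fun i _ => hp _) (Finset.mem_univ a)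
  rcases (hp (a, b)).eq_or_lt with h | h
  · simp [← h]
  · exact mul_le_mul_of_nonneg_left (Real.logb_le_logb_of_le (by norm_num) h hle) h.le

lemma shannon_mul {α β : Type*} [Fintype α] [Fintype β] (p : α → ℝ) (q : β → ℝ)
    (hp : ∑ a, p a = 1) (hq : ∑ b, q b = 1) :
    shannon (fun x : α × β => p x.1 * q x.2) = shannon p + shannon q := by
  unfold shannon
  rw [Fintype.sum_prod_type]
  have : ∀ a b, p a * q b * Real.logb 2 (p a * q b)
      = q b * (p a * Real.logb 2 (p a)) + p a * (q b * Real.logb 2 (q b)) := by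
    intro a b
    by_cases ha : p a = 0
    · simp [ha]
    by_cases hb : q b = 0
    · simp [hb]
    rw [Real.logb_mul ha hb]; ring
  simp only [this, Finset.sum_add_distrib, ← Finset.mul_sum, ← Finset.sum_mul, hp, hq]
  ring

lemma trace_idem {d : Type*} [Fintype d] [DecidableEq d] (P : Matrix d d ℂ)
    (h : P * P = P) : ∃ n : ℕ, P.trace = n := by
  have hi : IsIdempotentElem (Matrix.toLin' P) := by
    unfold IsIdempotentElem
    rw [Module.End.mul_eq_comp, ← Matrix.toLin'_mul, h]
  have := (LinearMap.IsIdempotentElem.isProj_range _ hi).trace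
  rw [Matrix.trace_toLin'_eq] at this
  exact ⟨_, this⟩

open scoped ComplexOrder in
lemma joint_nonneg {ιA ιB dA dB : Type*} [Fintype dA] [DecidableEq dA] [Fintype dB]
    [DecidableEq dB] (P : PVM ιA dA) (Q : PVM ιB dB)
    (ρ : Matrix (dA × dB) (dA × dB) ℂ) (hρ : ρ.PosSemidef) (x : ιA × ιB) :
    0 ≤ jointProb P Q ρ x := by
  unfold jointProb
  set K := P.proj x.1 ⊗ₖ Q.proj x.2 with hK
  have hh : Kᴴ = K := by
    rw [hK, Matrix.conjTranspose_kronecker, (P.herm _).eq, (Q.herm _).eq]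
  have hi : K * K = K := by
    rw [hK, ← Matrix.mul_kronecker_mul, P.idem, Q.idem]
  have h1 : (K * ρ).trace = (K * ρ * Kᴴ).trace := by
    rw [hh, Matrix.trace_mul_comm (K * ρ) K, ← Matrix.mul_assoc, hi]
  rw [h1]
  have := (hρ.mul_mul_conjTranspose_same K).trace_nonneg
  exact (Complex.le_def.1 this).1

lemma joint_margA {ιA ιB dA dB : Type*} [Fintype dA] [DecidableEq dA] [Fintype dB]
    [DecidableEq dB] (P : PVM ιA dA) (Q : PVM ιB dB)
    (ρ : Matrix (dA × dB) (dA × dB) ℂ)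
    (hρ : ∀ x x', ∑ y, ρ (x, y) (x', y) = if x = x' then 1/2 else 0) (a : ιA) :
    letI := Q.fintype
    ∑ b, jointProb P Q ρ (a, b) = (P.proj a).trace.re / 2 := by
  letI := Q.fintype
  unfold jointProb
  simp only
  rw [← Complex.re_sum, ← Matrix.trace_sum, ← Finset.sum_mul]
  have h1 : ∑ b, P.proj a ⊗ₖ Q.proj b = P.proj a ⊗ₖ 1 := by
    rw [← Q.complete]
    ext ⟨x, y⟩ ⟨x', y'⟩
    simp [Matrix.sum_apply, Finset.mul_sum]
  rw [h1]
  have h2 : ((P.proj a ⊗ₖ (1 : Matrix dB dB ℂ)) * ρ).trace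
      = ∑ x, ∑ x', P.proj a x x' * ∑ y, ρ (x', y) (x, y) := by
    simp only [Matrix.trace, Matrix.diag, Matrix.mul_apply, Fintype.sum_prod_type,
      Matrix.kroneckerMap_apply, Matrix.one_apply, Finset.mul_sum]
    refine Finset.sum_congr rfl fun x _ => ?_
    rw [Finset.sum_comm]
    refine Finset.sum_congr rfl fun x' _ => ?_
    refine Finset.sum_congr rfl fun y _ => ?_
    simp
  rw [h2]
  simp only [hρ]
  simp [Matrix.trace, ← Finset.sum_mul, div_eq_mul_inv]

open scoped ComplexOrder in
lemma mi_le_one {ιA ιB dA dB : Type*} [Fintype dA] [DecidableEq dA] [Fintype dB]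
    [DecidableEq dB] (P : PVM ιA dA) (Q : PVM ιB dB)
    (ρ : Matrix (dA × dB) (dA × dB) ℂ) (hpos : ρ.PosSemidef)
    (hρ : ∀ x x', ∑ y, ρ (x, y) (x', y) = if x = x' then 1/2 else 0)
    (hd : Fintype.card dA = 2) : miOf P Q ρ ≤ 1 := by
  letI := P.fintype
  letI := Q.fintype
  have h1 := shannon_marg_le (jointProb P Q ρ) (joint_nonneg P Q ρ hpos)
  have hsum : ∑ a, (P.proj a).trace.re / 2 = 1 := by
    rw [← Finset.sum_div, ← Complex.re_sum, ← Matrix.trace_sum, P.complete, Matrix.trace_one, hd]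
    norm_num
  have h2 : shannon (fun a => ∑ b, jointProb P Q ρ (a, b)) ≤ 1 := by
    have : (fun a => ∑ b, jointProb P Q ρ (a, b)) = fun a => (P.proj a).trace.re / 2 :=
      funext fun a => joint_margA P Q ρ hρ a
    rw [this, ← hsum]
    unfold shannon
    rw [← Finset.sum_neg_distrib]
    refine Finset.sum_le_sum fun a _ => ?_
    obtain ⟨n, hn⟩ := trace_idem _ (P.idem a)
    simp only [hn, Complex.natCast_re]
    rcases Nat.eq_zero_or_pos n with h | h
    · simp [h]
    · have h3 : (1:ℝ) ≤ n := by exact_mod_cast h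
      have h4 : Real.logb 2 (1/2) ≤ Real.logb 2 ((n:ℝ)/2) :=
        Real.logb_le_logb_of_le (by norm_num) (by norm_num) (by linarith)
      have h5 : Real.logb 2 (1/2) = -1 := by simp [Real.logb_inv]
      nlinarith
  unfold miOf
  linarith

lemma mi_prod {ιA ιB dA dB : Type*} [Fintype dA] [DecidableEq dA] [Fintype dB]
    [DecidableEq dB] (P : PVM ιA dA) (Q : PVM ιB dB)
    (ρ : Matrix (dA × dB) (dA × dB) ℂ)
    (hρ : ∀ x x', ρ x x' = if x = x' then 1/4 else 0)
    (hd : Fintype.card dA = 2) (hd' : Fintype.card dB = 2) : miOf P Q ρ = 0 := by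
  letI := P.fintype
  letI := Q.fintype
  have e : ρ = (1/4 : ℂ) • 1 := by
    ext x y
    rw [hρ]; simp [Matrix.one_apply]
  have hj : jointProb P Q ρ = fun x : ιA × ιB => ((P.proj x.1).trace.re / 2) * ((Q.proj x.2).trace.re / 2) := by
    funext x
    unfold jointProb
    obtain ⟨n, hn⟩ := trace_idem _ (P.idem x.1)
    obtain ⟨m, hm⟩ := trace_idem _ (Q.idem x.2)
    rw [e, Matrix.mul_smul, Matrix.mul_one, Matrix.trace_smul, Matrix.trace_kronecker, hn, hm]
    have : ((1/4 : ℂ) • ((n:ℂ) * m)) = (((1/4 : ℝ) * (n * m) : ℝ) : ℂ) := by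
      push_cast; simp
    rw [this, Complex.ofReal_re]
    simp; ring
  have hsP : ∑ a, (P.proj a).trace.re / 2 = 1 := by
    rw [← Finset.sum_div, ← Complex.re_sum, ← Matrix.trace_sum, P.complete, Matrix.trace_one, hd]
    norm_num
  have hsQ : ∑ a, (Q.proj a).trace.re / 2 = 1 := by
    rw [← Finset.sum_div, ← Complex.re_sum, ← Matrix.trace_sum, Q.complete, Matrix.trace_one, hd']
    norm_num
  unfold miOf
  simp only [hj]
  rw [shannon_mul _ _ hsP hsQ]
  simp only [← Finset.mul_sum, ← Finset.sum_mul, hsP, hsQ, mul_one, one_mul, sub_self]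

lemma mi_comp {dA dB : Type*} [Fintype dA] [DecidableEq dA] [Fintype dB]
    [DecidableEq dB] (ρ : Matrix (dA × dB) (dA × dB) ℂ) (e : dA ≃ dB)
    (hρ : ∀ x y, ρ (x, y) (x, y) = if e x = y then 1/2 else 0)
    (hd : Fintype.card dA = 2) : miOf (compPVM dA) (compPVM dB) ρ = 1 := by
  have hd' : Fintype.card dB = 2 := by rw [← Fintype.card_congr e, hd]
  have hj : ∀ x y, jointProb (compPVM dA) (compPVM dB) ρ (x, y) = if e x = y then 1/2 else 0 := by
    intro x y
    have : (((compPVM dA).proj x ⊗ₖ (compPVM dB).proj y) * ρ).trace = ρ (x, y) (x, y) := by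
      have h1 : ((compPVM dA).proj x ⊗ₖ (compPVM dB).proj y)
          = Matrix.diagonal (fun z => if z = (x, y) then 1 else 0) := by
        simp only [compPVM]
        rw [Matrix.diagonal_kronecker_diagonal]
        congr 1
        funext z
        by_cases h1 : z.1 = x <;> by_cases h2 : z.2 = y <;> simp [h1, h2, Prod.ext_iff]
      rw [h1]
      simp [Matrix.trace, Matrix.diagonal_mul]
    unfold jointProb
    simp only
    rw [this, hρ]
    split_ifs <;> simp
  have hsA : (∑ x : dA, (1/2 : ℝ) * Real.logb 2 (1/2)) = -1 := by
    simp [hd, Real.logb_inv]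
  have hsB : (∑ x : dB, (1/2 : ℝ) * Real.logb 2 (1/2)) = -1 := by
    simp [hd', Real.logb_inv]
  have hA : ∀ x, ∑ y, jointProb (compPVM dA) (compPVM dB) ρ (x, y) = 1/2 := by
    intro x; simp [hj]
  have hB : ∀ y, ∑ x, jointProb (compPVM dA) (compPVM dB) ρ (x, y) = 1/2 := by
    intro y
    simp only [hj, ← Equiv.eq_symm_apply]
    simp
  change shannon (fun a => ∑ b, jointProb (compPVM dA) (compPVM dB) ρ (a, b)) +
    shannon (fun b => ∑ a, jointProb (compPVM dA) (compPVM dB) ρ (a, b)) -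
    shannon (jointProb (compPVM dA) (compPVM dB) ρ) = 1
  simp only [hA, hB]
  unfold shannon
  rw [hsA, hsB, Fintype.sum_prod_type]
  have : ∀ x, ∑ y, jointProb (compPVM dA) (compPVM dB) ρ (x, y) *
      Real.logb 2 (jointProb (compPVM dA) (compPVM dB) ρ (x, y)) = (1/2 : ℝ) * Real.logb 2 (1/2) := by
    intro x
    rw [Finset.sum_eq_single (e x)]
    · simp [hj]
    · intro b _ hb
      simp [hj, hb.symm]
    · simp
  simp only [this, hsA]
  norm_num

lemma ghzVec_eq {Nq Ns Nm : ℕ} (N : Net Nq Ns Nm) (x : Fin Nq → Fin 2) :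
    N.ghzVec x = if (∀ q q', N.src q = N.src q' → x q = x q')
      then ((((Real.sqrt 2 : ℝ) : ℂ)⁻¹) ^ Ns) else 0 := by
  unfold Net.ghzVec
  split_ifs with h
  · rw [Finset.prod_congr rfl (g := fun _ => ((Real.sqrt 2 : ℝ) : ℂ)⁻¹)]
    · simp
    · intro i _
      rw [if_pos]
      by_cases hi : ∃ q, N.src q = i
      · obtain ⟨q, rfl⟩ := hi
        exact ⟨x q, fun q' hq' => h _ _ hq'⟩
      · exact ⟨0, fun q hq => (hi ⟨q, hq⟩).elim⟩
  · push Not at h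
    obtain ⟨q, q', h1, h2⟩ := h
    refine Finset.prod_eq_zero (Finset.mem_univ (N.src q)) ?_
    rw [if_neg]
    rintro ⟨b, hb⟩
    exact h2 ((hb q rfl).trans (hb q' h1.symm).symm)

lemma ghz_off {Nq Ns Nm : ℕ} (N : Net Nq Ns Nm) (x y : Fin Nq → Fin 2) (i q : Fin Nq)
    (hs : N.src q = N.src i) (hi : x i ≠ y i) (hq : x q = y q) :
    N.ghzState x y = 0 := by
  simp only [Net.ghzState, Matrix.of_apply, ghzVec_eq]
  split_ifs with h1 h2 <;> try simp
  exact absurd ((h1 _ _ hs).symm.trans (hq.trans (h2 _ _ hs))) hi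

lemma ghz_diag {Nq Ns Nm : ℕ} (N : Net Nq Ns Nm) (x : Fin Nq → Fin 2) :
    N.ghzState x x = if (∀ q q', N.src q = N.src q' → x q = x q') then (1/2 : ℂ)^Ns else 0 := by
  simp only [Net.ghzState, Matrix.of_apply, ghzVec_eq]
  split_ifs with h1
  · rw [star_pow, ← mul_pow]
    congr 1
    have : star (((Real.sqrt 2 : ℝ) : ℂ)⁻¹) = (((Real.sqrt 2 : ℝ) : ℂ)⁻¹) := by
      rw [← Complex.ofReal_inv]; exact Complex.conj_ofReal _
    rw [this, ← mul_inv, ← Complex.ofReal_mul, Real.mul_self_sqrt (by norm_num)]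
    norm_num
  · simp

lemma pair_sum {Nq Ns Nm : ℕ} (N : Net Nq Ns Nm) (hsurj : Function.Surjective N.src)
    (i j : Fin Nq) (b c : Fin 2) :
    ∑ x, (if x i = b ∧ x j = c then N.ghzState x x else 0) =
      if N.src i = N.src j then (if b = c then 1/2 else 0) else 1/4 := by
  have h1 := Fintype.sum_of_injective (fun (w : Fin Ns → Fin 2) (q : Fin Nq) => w (N.src q))
    hsurj.injective_comp_right
    (fun w => ∏ k, ((1/2 : ℂ) * ((if k = N.src i then (if w k = b then 1 else 0) else 1) *
      (if k = N.src j then (if w k = c then 1 else 0) else 1))))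
    (fun x => (if x i = b ∧ x j = c then N.ghzState x x else 0)) ?_ ?_
  · rw [← h1]
    have h2 := Finset.sum_prod_piFinset (Finset.univ : Finset (Fin 2))
      (fun (k : Fin Ns) (v : Fin 2) => ((1/2 : ℂ) * ((if k = N.src i then (if v = b then 1 else 0) else 1) *
      (if k = N.src j then (if v = c then 1 else 0) else 1))))
    rw [Fintype.piFinset_univ] at h2
    rw [h2]
    simp only [Fin.sum_univ_two]
    by_cases hij : N.src i = N.src j
    · rw [if_pos hij]
      by_cases hbc : b = c
      · rw [if_pos hbc]
        rw [Finset.prod_congr rfl (g := fun k => if k = N.src i then (1/2 : ℂ) else 1)]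
        · simp
        · intro k _
          subst hbc
          rw [← hij]
          by_cases hk : k = N.src i
          · simp only [if_pos hk]
            fin_cases b <;> simp
          · simp only [if_neg hk]
            norm_num
      · rw [if_neg hbc]
        refine Finset.prod_eq_zero (Finset.mem_univ (N.src i)) ?_
        rw [← hij]
        simp only [if_true]
        fin_cases b <;> fin_cases c <;> simp at hbc ⊢
    · rw [if_neg hij]
      rw [Finset.prod_congr rfl (g := fun k => (if k = N.src i then (1/2 : ℂ) else 1) *
        (if k = N.src j then (1/2 : ℂ) else 1))]
      · rw [Finset.prod_mul_distrib]
        simp; norm_num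
      · intro k _
        by_cases hi : k = N.src i
        · have hj : k ≠ N.src j := fun h => hij (hi.symm.trans h)
          simp only [if_pos hi, if_neg hj]
          fin_cases b <;> simp
        · by_cases hj : k = N.src j
          · simp only [if_pos hj, if_neg hi]
            fin_cases c <;> simp
          · simp only [if_neg hj, if_neg hi]
            norm_num
  · intro x hx
    rw [ghz_diag]
    split_ifs with h2 h3 <;> try rfl
    refine (hx ⟨fun k => x (Function.surjInv hsurj k), ?_⟩).elim
    funext q
    exact h3 _ _ (Function.surjInv_eq hsurj _)
  · intro w
    rw [ghz_diag, if_pos (show ∀ q q', N.src q = N.src q' → w (N.src q) = w (N.src q') from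
      fun q q' h => by rw [h])]
    rw [Finset.prod_mul_distrib, Finset.prod_mul_distrib, Finset.prod_ite_eq', Finset.prod_ite_eq']
    simp only [Finset.mem_univ, if_true, Finset.prod_const, Finset.card_univ, Fintype.card_fin]
    by_cases h1 : w (N.src i) = b <;> by_cases h2 : w (N.src j) = c <;> simp [h1, h2]

lemma A1_other {Nq Ns Nm : ℕ} (N : Net Nq Ns Nm) (hA1 : N.A1) (i : Fin Nq) :
    ∃ q, q ≠ i ∧ N.src q = N.src i := by
  have h := hA1 (N.src i)
  have : 1 < Fintype.card {q : Fin Nq // N.src q = N.src i} := h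
  obtain ⟨⟨q, hq⟩, hne⟩ := Fintype.exists_ne_of_one_lt_card this ⟨i, rfl⟩
  exact ⟨q, fun h => hne (Subtype.ext h), hq⟩

lemma A1_surj {Nq Ns Nm : ℕ} (N : Net Nq Ns Nm) (hA1 : N.A1) : Function.Surjective N.src := by
  intro k
  have h := hA1 k
  have : 0 < Fintype.card {q : Fin Nq // N.src q = k} := by omega
  obtain ⟨⟨q, hq⟩⟩ := Fintype.card_pos_iff.1 this
  exact ⟨q, hq⟩

lemma sub_ext {Nq Ns : ℕ} (N : Net Nq Ns Nq) (hnode : ∀ q, N.node q = q) (i : Fin Nq)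
    (x y : {q : Fin Nq // N.node q = i} → Fin 2) :
    x = y ↔ x ⟨i, hnode i⟩ = y ⟨i, hnode i⟩ := by
  constructor
  · rintro rfl; rfl
  · intro h
    funext ⟨q, hq⟩
    have : q = i := by rw [← hq, hnode]
    subst this
    exact h

/-- assignments at a single-qubit node -/
def evEquiv {Nq Ns : ℕ} (N : Net Nq Ns Nq) (hnode : ∀ q, N.node q = q) (i : Fin Nq) :
    ({q : Fin Nq // N.node q = i} → Fin 2) ≃ Fin 2 where
  toFun x := x ⟨i, hnode i⟩
  invFun b := fun _ => b
  left_inv x := (sub_ext N hnode i _ _).2 rfl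
  right_inv b := rfl

lemma card_sub {Nq Ns : ℕ} (N : Net Nq Ns Nq) (hnode : ∀ q, N.node q = q) (i : Fin Nq) :
    Fintype.card ({q : Fin Nq // N.node q = i} → Fin 2) = 2 := by
  rw [Fintype.card_congr (evEquiv N hnode i)]; simp

lemma reduceNode_eq {Nq Ns : ℕ} (N : Net Nq Ns Nq) (hnode : ∀ q, N.node q = q) (hA1 : N.A1)
    (i : Fin Nq) (x y : {q : Fin Nq // N.node q = i} → Fin 2) :
    N.reduceNode i N.ghzState x y = if x = y then 1/2 else 0 := by
  simp only [Net.reduceNode, Matrix.of_apply]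
  split_ifs with h
  · subst h
    have h1 := pair_sum N (A1_surj N hA1) i i (x ⟨i, hnode i⟩) (x ⟨i, hnode i⟩)
    simp only [if_true] at h1
    rw [← h1]
    refine Fintype.sum_of_injective
      (fun (z : {q : Fin Nq // N.node q ≠ i} → Fin 2) (q : Fin Nq) =>
        if h : N.node q = i then x ⟨q, h⟩ else z ⟨q, h⟩) ?_ _ _ ?_ ?_
    · intro z z' hz
      funext ⟨q, hq⟩
      have := congrFun hz q
      simpa [hq] using this
    · intro X hX
      rw [if_neg]
      rintro ⟨h2, -⟩
      refine hX ⟨fun q => X q.1, ?_⟩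
      funext q
      by_cases hq : N.node q = i
      · have : q = i := by rw [← hq, hnode]
        subst this
        simp [hq, h2]
      · simp [hq]
    · intro z
      rw [if_pos]
      simp [hnode i]
  · refine Finset.sum_eq_zero fun z _ => ?_
    obtain ⟨q, hq, hs⟩ := A1_other N hA1 i
    refine ghz_off N _ _ i q hs ?_ ?_
    · simpa [hnode i] using fun h2 => h ((sub_ext N hnode i x y).2 h2)
    · have : ¬ N.node q = i := by rwa [hnode]
      simp [this]

lemma merge_fst {Nq Ns : ℕ} (N : Net Nq Ns Nq) (hnode : ∀ q, N.node q = q) (i j : Fin Nq) (x z) :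
    N.mergePair i j x z i = x.1 ⟨i, hnode i⟩ := by
  simp [Net.mergePair, hnode i]

lemma merge_snd {Nq Ns : ℕ} (N : Net Nq Ns Nq) (hnode : ∀ q, N.node q = q) (i j : Fin Nq)
    (hij : i ≠ j) (x z) :
    N.mergePair i j x z j = x.2 ⟨j, hnode j⟩ := by
  have : ¬ N.node j = i := by rw [hnode]; exact hij.symm
  simp only [Net.mergePair, dif_neg this, dif_pos (hnode j)]

lemma reducePair_diag {Nq Ns : ℕ} (N : Net Nq Ns Nq) (hnode : ∀ q, N.node q = q) (hA1 : N.A1)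
    (i j : Fin Nq) (hij : i ≠ j) (x) :
    N.reducePair i j N.ghzState x x = if N.src i = N.src j then
      (if x.1 ⟨i, hnode i⟩ = x.2 ⟨j, hnode j⟩ then 1/2 else 0) else 1/4 := by
  simp only [Net.reducePair, Matrix.of_apply]
  rw [← pair_sum N (A1_surj N hA1) i j]
  refine Fintype.sum_of_injective (fun z => N.mergePair i j x z) ?_ _ _ ?_ ?_
  · intro z z' hz
    funext ⟨q, hq, hq'⟩
    have := congrFun hz q
    simpa [Net.mergePair, hq, hq'] using this
  · intro X hX
    rw [if_neg]
    rintro ⟨h2, h3⟩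
    refine hX ⟨fun q => X q.1, ?_⟩
    funext q
    by_cases hq : q = i
    · subst hq
      simp only
      rw [merge_fst N hnode, h2]
    · by_cases hq' : q = j
      · subst hq'
        simp only
        rw [merge_snd N hnode _ _ hij, h3]
      · have h4 : ¬ N.node q = i := by rwa [hnode]
        have h5 : ¬ N.node q = j := by rwa [hnode]
        simp [Net.mergePair, h4, h5]
  · intro z
    rw [if_pos]
    exact ⟨merge_fst N hnode _ _ _ _, merge_snd N hnode _ _ hij _ _⟩

lemma reducePair_off1 {Nq Ns : ℕ} (N : Net Nq Ns Nq) (hnode : ∀ q, N.node q = q) (hA1 : N.A1)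
    (i j : Fin Nq) (hij : i ≠ j) (x y) (hx : x.1 ≠ y.1) (hy : x.2 = y.2 ∨ N.src i ≠ N.src j) :
    N.reducePair i j N.ghzState x y = 0 := by
  simp only [Net.reducePair, Matrix.of_apply]
  refine Finset.sum_eq_zero fun z _ => ?_
  obtain ⟨q, hq, hs⟩ := A1_other N hA1 i
  refine ghz_off N _ _ i q hs ?_ ?_
  · rw [merge_fst N hnode, merge_fst N hnode]
    exact fun h2 => hx ((sub_ext N hnode i _ _).2 h2)
  · by_cases hqj : q = j
    · subst hqj
      rw [merge_snd N hnode _ _ hij, merge_snd N hnode _ _ hij]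
      rcases hy with hy | hy
      · rw [hy]
      · exact absurd hs.symm hy
    · have h4 : ¬ N.node q = i := by rwa [hnode]
      have h5 : ¬ N.node q = j := by rwa [hnode]
      simp [Net.mergePair, h4, h5]

lemma reducePair_off2 {Nq Ns : ℕ} (N : Net Nq Ns Nq) (hnode : ∀ q, N.node q = q) (hA1 : N.A1)
    (i j : Fin Nq) (hij : i ≠ j) (x y) (hx : x.2 ≠ y.2) (hy : N.src i ≠ N.src j) :
    N.reducePair i j N.ghzState x y = 0 := by
  simp only [Net.reducePair, Matrix.of_apply]
  refine Finset.sum_eq_zero fun z _ => ?_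
  obtain ⟨q, hq, hs⟩ := A1_other N hA1 j
  refine ghz_off N _ _ j q hs ?_ ?_
  · rw [merge_snd N hnode _ _ hij, merge_snd N hnode _ _ hij]
    exact fun h2 => hx ((sub_ext N hnode j _ _).2 h2)
  · have h3 : q ≠ i := by
      rintro rfl
      exact hy hs
    have h4 : ¬ N.node q = i := by rwa [hnode]
    have h5 : ¬ N.node q = j := by rwa [hnode]
    simp [Net.mergePair, h4, h5]

open scoped ComplexOrder in
lemma reducePair_psd {Nq Ns : ℕ} (N : Net Nq Ns Nq) (i j : Fin Nq) :
    (N.reducePair i j N.ghzState).PosSemidef := by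
  have : N.reducePair i j N.ghzState = ∑ z, Matrix.vecMulVec
      (fun x => N.ghzVec (N.mergePair i j x z)) (star (fun x => N.ghzVec (N.mergePair i j x z))) := by
    ext x y
    simp [Net.reducePair, Net.ghzState, Matrix.sum_apply, Matrix.vecMulVec_apply]
  rw [this]
  exact Matrix.posSemidef_sum _ fun z _ => Matrix.posSemidef_vecMulVec_self_star _

lemma mmi_eq {Nq Ns : ℕ} (N : Net Nq Ns Nq) (hnode : ∀ q, N.node q = q) (hA1 : N.A1)
    (i j : Fin Nq) (hij : i ≠ j) :
    measuredMI (N.reducePair i j N.ghzState) = if N.src i = N.src j then 1 else 0 := by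
  unfold measuredMI
  split_ifs with hs
  · have hA : ∀ x x', ∑ y, N.reducePair i j N.ghzState (x, y) (x', y)
        = if x = x' then 1/2 else 0 := by
      intro x x'
      split_ifs with h
      · subst h
        simp only [reducePair_diag N hnode hA1 i j hij, if_pos hs]
        rw [← Equiv.sum_comp (evEquiv N hnode j).symm]
        simp [evEquiv]
      · exact Finset.sum_eq_zero fun y _ =>
          reducePair_off1 N hnode hA1 i j hij _ _ h (Or.inl rfl)
    refine IsGreatest.csSup_eq ⟨⟨_, _, compPVM _, compPVM _, (mi_comp _
      ((evEquiv N hnode i).trans (evEquiv N hnode j).symm) ?_ (card_sub N hnode i)).symm⟩, ?_⟩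
    · intro x y
      rw [reducePair_diag N hnode hA1 i j hij, if_pos hs]
      simp only [Equiv.trans_apply, Equiv.symm_apply_eq]
      rfl
    · rintro r ⟨ιA, ιB, P, Q, rfl⟩
      exact mi_le_one P Q _ (reducePair_psd N i j) hA (card_sub N hnode i)
  · have hA : ∀ x x', N.reducePair i j N.ghzState x x' = if x = x' then 1/4 else 0 := by
      intro x x'
      split_ifs with h
      · subst h
        rw [reducePair_diag N hnode hA1 i j hij, if_neg hs]
      · by_cases h1 : x.1 = x'.1
        · exact reducePair_off2 N hnode hA1 i j hij _ _ (fun h2 => h (Prod.ext h1 h2)) hs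
        · exact reducePair_off1 N hnode hA1 i j hij _ _ h1 (Or.inr hs)
    have h0 : ∀ (ιA ιB : Type) (P : PVM ιA _) (Q : PVM ιB _),
        miOf P Q (N.reducePair i j N.ghzState) = 0 := fun _ _ P Q =>
      mi_prod P Q _ hA (card_sub N hnode i) (card_sub N hnode j)
    refine IsGreatest.csSup_eq ⟨⟨_, _, compPVM _, compPVM _, (h0 _ _ _ _).symm⟩, ?_⟩
    rintro r ⟨ιA, ιB, P, Q, rfl⟩
    exact (h0 _ _ P Q).le

/-- for a GHZ network in which each qubit is its own measurement node
(Assumption A2 is then automatic), the qubit characteristic matrix `Q` satisfies: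
(i) `Q_{ii} = 1`; (ii) for `i ≠ j`, `Q_{ij} = 1` if `q_i, q_j` share a source and `0`
otherwise; (iii) two rows agree iff the corresponding qubits share a source; and
(iv) the number of distinct rows equals the number of sources. -/
theorem qubit_characteristic_matrix_determines_topology
    {Nq Ns : ℕ} (N : Net Nq Ns Nq) (hnode : ∀ q, N.node q = q) (hA1 : N.A1) :
    (∀ i, qubitCharMatrix N i i = 1) ∧
    (∀ i j, i ≠ j →
        qubitCharMatrix N i j = if N.src i = N.src j then 1 else 0) ∧
    (∀ i j, (∀ k, qubitCharMatrix N i k = qubitCharMatrix N j k) ↔ N.src i = N.src j) ∧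
    (Finset.univ.image (fun i => qubitCharMatrix N i)).card = Ns := by
  have hd : ∀ i, qubitCharMatrix N i i = 1 := by
    intro i
    unfold qubitCharMatrix
    rw [if_pos rfl]
    exact vn_half _ (reduceNode_eq N hnode hA1 i) (card_sub N hnode i)
  have ho : ∀ i j, i ≠ j → qubitCharMatrix N i j = if N.src i = N.src j then 1 else 0 := by
    intro i j hij
    unfold qubitCharMatrix
    rw [if_neg hij]
    exact mmi_eq N hnode hA1 i j hij
  have hall : ∀ i j, qubitCharMatrix N i j = if N.src i = N.src j then 1 else 0 := by
    intro i j
    by_cases h : i = j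
    · subst h
      rw [hd, if_pos rfl]
    · exact ho i j h
  refine ⟨hd, ho, ?_, ?_⟩
  · intro i j
    constructor
    · intro h
      have h1 := h i
      rw [hall, hall, if_pos rfl] at h1
      by_contra hne
      rw [if_neg (Ne.symm hne)] at h1
      exact one_ne_zero h1
    · intro h k
      rw [hall, hall, h]
  · have hsurj := A1_surj N hA1
    have e : (fun i => qubitCharMatrix N i)
        = (fun (s : Fin Ns) (k : Fin Nq) => if s = N.src k then (1:ℝ) else 0) ∘ N.src := by
      funext i k
      exact hall i k
    have hinj : Function.Injective
        (fun (s : Fin Ns) (k : Fin Nq) => if s = N.src k then (1:ℝ) else 0) := by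
      intro s t hst
      obtain ⟨k, rfl⟩ := hsurj s
      have h1 := congrFun hst k
      simp only [if_true] at h1
      by_contra hne
      rw [if_neg (Ne.symm hne)] at h1
      exact one_ne_zero h1
    rw [e, ← Finset.image_image, Finset.image_univ_of_surjective hsurj,
      Finset.card_image_of_injective _ hinj]
    simp

end
end
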